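/- Let F be an algebraically closed field, let n and k be positive integers with 2k < n, and let S be a finite generating system of the full matrix algebra M_n(F). Suppose S contains a matrix A whose minimal polynomial has degree n − k, and suppose that for every eigenvalue λ of A, writing n_λ for the algebraic multiplicity of λ (its multiplicity as a root of the characteristic polynomial of A) and m_λ for its multiplicity as a root of the minimal polynomial of A, one has 2(n_λ − m_λ) < n_λ. Then ℓ(S) ≤ 2n − 2 + k. -/

import Mathlib

open Polynomial Matrix

/-- The `F`-linear span of all words over `S` of length at most `i`
(the empty word being `1`). -/
def wordSpan (F : Type*) {A : Type*} [Field F] [Ring A] [Algebra F A]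
    (S : Set A) (i : ℕ) : Submodule F A :=
  Submodule.span F {x : A | ∃ l : List A, l.length ≤ i ∧ (∀ a ∈ l, a ∈ S) ∧ l.prod = x}

/-- `S` is a generating system of the algebra `A`:
`A` is the union of the subspaces `wordSpan F S i`. -/
def IsGeneratingSystem (F : Type*) {A : Type*} [Field F] [Ring A] [Algebra F A]
    (S : Set A) : Prop :=
  ∀ x : A, ∃ i : ℕ, x ∈ wordSpan F S i

/-- The length of a generating system `S`: the least `k` with `wordSpan F S k = ⊤`. -/
noncomputable def genLength (F : Type*) {A : Type*} [Field F] [Ring A] [Algebra F A]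
    (S : Set A) : ℕ :=
  sInf {k : ℕ | wordSpan F S k = ⊤}

section
variable {F : Type*} [Field F] {n : ℕ}

lemma ws_mono {A : Type*} [Ring A] [Algebra F A] (S : Set A) {i j : ℕ} (h : i ≤ j) :
    wordSpan F S i ≤ wordSpan F S j := by
  apply Submodule.span_mono
  rintro x ⟨l, hl, h2, h3⟩
  exact ⟨l, hl.trans h, h2, h3⟩

lemma ws_mul {A : Type*} [Ring A] [Algebra F A] (S : Set A) {i j : ℕ} {x y : A}
    (hx : x ∈ wordSpan F S i) (hy : y ∈ wordSpan F S j) : x * y ∈ wordSpan F S (i + j) := by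
  have : wordSpan F S i * wordSpan F S j ≤ wordSpan F S (i + j) := by
    unfold wordSpan
    rw [Submodule.span_mul_span]
    apply Submodule.span_mono
    rintro _ ⟨a, ⟨l, h1, h2, h3⟩, b, ⟨l', h1', h2', h3'⟩, rfl⟩
    refine ⟨l ++ l', by simp; omega, ?_, by simp [h3, h3']⟩
    intro a ha
    rcases List.mem_append.1 ha with h | h
    · exact h2 a h
    · exact h2' a h
  exact this (Submodule.mul_mem_mul hx hy)

lemma ws_one {A : Type*} [Ring A] [Algebra F A] (S : Set A) (i : ℕ) : (1 : A) ∈ wordSpan F S i :=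
  Submodule.subset_span ⟨[], by simp, by simp, by simp⟩

lemma ws_gen {A : Type*} [Ring A] [Algebra F A] {S : Set A} {a : A} (h : a ∈ S) :
    a ∈ wordSpan F S 1 :=
  Submodule.subset_span ⟨[a], by simp, by simpa using h, by simp⟩

lemma ws_pow {A : Type*} [Ring A] [Algebra F A] {S : Set A} {a : A} (h : a ∈ S) (i : ℕ) :
    a ^ i ∈ wordSpan F S i :=
  Submodule.subset_span ⟨List.replicate i a, by simp, by
    intro b hb; rw [List.eq_of_mem_replicate hb]; exact h, by simp⟩

lemma ws_aeval {A : Type*} [Ring A] [Algebra F A] {S : Set A} {a : A} (h : a ∈ S) (q : F[X])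
    {d : ℕ} (hd : q.natDegree ≤ d) : aeval a q ∈ wordSpan F S d := by
  rw [aeval_eq_sum_range]
  refine Submodule.sum_mem _ fun i hi => Submodule.smul_mem _ _ ?_
  exact ws_mono S (by simp at hi; omega) (ws_pow h i)

/-- `L_j W`. -/
noncomputable def act (S : Set (Matrix (Fin n) (Fin n) F)) (W : Submodule F (Fin n → F)) (j : ℕ) :
    Submodule F (Fin n → F) :=
  Submodule.map₂ (Matrix.mulVecBilin F F) (wordSpan F S j) W

lemma mem_act {S : Set (Matrix (Fin n) (Fin n) F)} {W : Submodule F (Fin n → F)} {j : ℕ}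
    {M x} (hM : M ∈ wordSpan F S j) (hx : x ∈ W) : M *ᵥ x ∈ act S W j :=
  Submodule.apply_mem_map₂ (Matrix.mulVecBilin F F) hM hx

lemma act_step (S : Set (Matrix (Fin n) (Fin n) F)) (hgen : IsGeneratingSystem F S)
    (W : Submodule F (Fin n → F)) (hW : W ≠ ⊥) (j : ℕ) (hj : act S W j ≠ ⊤) :
    act S W j < act S W (j + 1) := by
  have hle : act S W j ≤ act S W (j + 1) :=
    Submodule.map₂_le_map₂_left (ws_mono S (Nat.le_succ j))
  refine lt_of_le_of_ne hle fun heq => hj ?_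
  have h1 : ∀ s ∈ S, ∀ y ∈ act S W j, s *ᵥ y ∈ act S W j := by
    intro s hs y hy
    have : act S W j ≤ (act S W (j+1)).comap (Matrix.mulVecLin s) := by
      refine Submodule.map₂_le.2 fun M hM x hx => ?_
      have := mem_act (ws_mul S (ws_gen hs) hM) hx
      rw [add_comm 1 j] at this
      simpa [Matrix.mulVec_mulVec] using this
    have := this hy
    rw [← heq] at this
    exact this
  have h2 : ∀ l : List (Matrix (Fin n) (Fin n) F), (∀ a ∈ l, a ∈ S) → ∀ y ∈ act S W j,
      l.prod *ᵥ y ∈ act S W j := by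
    intro l
    induction l with
    | nil => intro _ y hy; simpa using hy
    | cons a l ih =>
      intro h y hy
      rw [List.prod_cons, ← Matrix.mulVec_mulVec]
      exact h1 a (h a (by simp)) _ (ih (fun b hb => h b (by simp [hb])) y hy)
  have h3 : ∀ M : Matrix (Fin n) (Fin n) F, ∀ y ∈ act S W j, M *ᵥ y ∈ act S W j := by
    intro M y hy
    obtain ⟨i, hi⟩ := hgen M
    have : wordSpan F S i ≤ (act S W j).comap ((Matrix.mulVecBilin F F).flip y) := by
      refine Submodule.span_le.2 ?_
      rintro _ ⟨l, -, hl, rfl⟩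
      simpa using h2 l hl y hy
    simpa using this hi
  obtain ⟨x, hx, hx0⟩ := Submodule.exists_mem_ne_zero_of_ne_bot hW
  have hx' : x ∈ act S W j := by simpa using mem_act (ws_one S j) hx
  obtain ⟨i, hi⟩ := Function.ne_iff.1 hx0
  refine eq_top_iff.2 fun y _ => ?_
  have := h3 (Matrix.vecMulVec y (Pi.single i (x i)⁻¹)) x hx'
  rw [Matrix.vecMulVec_mulVec] at this
  simpa [inv_mul_cancel₀ hi] using this

lemma act_dim (S : Set (Matrix (Fin n) (Fin n) F)) (hgen : IsGeneratingSystem F S)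
    (W : Submodule F (Fin n → F)) (hW : W ≠ ⊥) (j : ℕ) :
    act S W j = ⊤ ∨ Module.finrank F W + j ≤ Module.finrank F (act S W j) := by
  induction j with
  | zero =>
    right
    refine Submodule.finrank_mono fun x hx => ?_
    simpa using mem_act (ws_one S 0) hx
  | succ j ih =>
    by_cases h : act S W j = ⊤
    · left
      refine eq_top_iff.2 (h ▸ Submodule.map₂_le_map₂_left (ws_mono S (Nat.le_succ j)))
    · right
      have := Submodule.finrank_lt_finrank_of_lt (act_step S hgen W hW j h)
      have := ih.resolve_left h
      omega

lemma act_top (S : Set (Matrix (Fin n) (Fin n) F)) (hgen : IsGeneratingSystem F S)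
    (W : Submodule F (Fin n → F)) (hW : W ≠ ⊥) (j : ℕ) (hj : n ≤ Module.finrank F W + j) :
    act S W j = ⊤ := by
  rcases act_dim S hgen W hW j with h | h
  · exact h
  · apply Submodule.eq_top_of_finrank_eq
    have := Submodule.finrank_le (act S W j)
    simp at this ⊢
    omega

/-- `f L_{n-1}` is everything. -/
lemma row_top (S : Set (Matrix (Fin n) (Fin n) F)) (hgen : IsGeneratingSystem F S)
    (f : Fin n → F) (hf : f ≠ 0) (g : Fin n → F) :
    ∃ M ∈ wordSpan F S (n - 1), f ᵥ* M = g := by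
  have : (wordSpan F S (n-1)).map ((Matrix.vecMulBilin F F) f) = ⊤ := by
    by_contra hne
    obtain ⟨φ, hφ0, hφ⟩ := Submodule.exists_le_ker_of_lt_top _ (lt_top_iff_ne_top.2 hne)
    obtain ⟨x, hx⟩ : ∃ x : Fin n → F, ∀ y, φ y = y ⬝ᵥ x := by
      refine ⟨fun i => φ (Pi.single i 1), fun y => ?_⟩
      conv_lhs => rw [pi_eq_sum_univ' y]
      simp [dotProduct]
    have hx0 : x ≠ 0 := by
      rintro rfl
      exact hφ0 (LinearMap.ext fun y => by simp [hx])
    have htop : act S (F ∙ x) (n-1) = ⊤ := by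
      apply act_top S hgen _ (by simpa using hx0)
      rw [finrank_span_singleton hx0]; omega
    have : act S (F ∙ x) (n-1) ≤ LinearMap.ker (dotProductBilin F F f) := by
      refine Submodule.map₂_le.2 fun M hM y hy => ?_
      obtain ⟨a, rfl⟩ := Submodule.mem_span_singleton.1 hy
      have := hφ (Submodule.mem_map_of_mem hM)
      rw [LinearMap.mem_ker, hx] at this
      simp only [Matrix.vecMulBilin_apply] at this
      simp [Matrix.dotProduct_mulVec, this]
    rw [htop] at this
    apply hf
    ext i
    have := this (Submodule.mem_top (x := Pi.single i 1))
    simpa using this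
  have hg : g ∈ (⊤ : Submodule F (Fin n → F)) := trivial
  rw [← this] at hg
  obtain ⟨M, hM, h⟩ := hg
  exact ⟨M, hM, h⟩
end

section
variable {F : Type*} [Field F] {n : ℕ}

/-- `f ↦ f(A) c`. -/
noncomputable def cyc (A : Matrix (Fin n) (Fin n) F) (c : Fin n → F) : F[X] →ₗ[F] (Fin n → F) :=
  ((Matrix.mulVecBilin F F).flip c).comp (aeval A).toLinearMap

lemma cyc_apply (A : Matrix (Fin n) (Fin n) F) (c : Fin n → F) (f : F[X]) :
    cyc A c f = aeval A f *ᵥ c := rfl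

lemma cyc_mul (A : Matrix (Fin n) (Fin n) F) (c : Fin n → F) (f g : F[X]) :
    cyc A c (f * g) = aeval A f *ᵥ cyc A c g := by
  simp [cyc_apply, Matrix.mulVec_mulVec]

lemma exists_cyc [IsAlgClosed F] (A : Matrix (Fin n) (Fin n) F) :
    ∃ c, ∀ f, cyc A c f = 0 → minpoly F A ∣ f := by
  classical
  have hint : IsIntegral F A := Matrix.isIntegral A
  have hp0 : minpoly F A ≠ 0 := minpoly.ne_zero hint
  set p := minpoly F A with hp
  let K : F → Submodule F (Fin n → F) :=
    fun l => LinearMap.ker (Matrix.mulVecLin (aeval A (p /ₘ (X - C l))))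
  have h1 : ⊤ ∉ p.roots.toFinset.image K := by
    intro h
    obtain ⟨l, hl, h⟩ := Finset.mem_image.1 h
    have hl' : p.IsRoot l := by simpa [hp0] using hl
    have hm := Polynomial.mul_divByMonic_eq_iff_isRoot.2 hl'
    have hz : aeval A (p /ₘ (X - C l)) = 0 := by
      have : Matrix.mulVecLin (aeval A (p /ₘ (X - C l))) = 0 := LinearMap.ker_eq_top.1 h
      apply Matrix.ext_of_mulVec_single
      intro i
      have := LinearMap.congr_fun this (Pi.single i 1)
      rw [Matrix.zero_mulVec]
      exact this
    have hd := minpoly.dvd F A hz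
    rw [← hp] at hd
    have hne : p /ₘ (X - C l) ≠ 0 := by
      intro h; rw [h, mul_zero] at hm; exact hp0 hm.symm
    have h3 := Polynomial.natDegree_le_of_dvd hd hne
    have h4 := congrArg natDegree hm
    rw [natDegree_mul (X_sub_C_ne_zero l) hne, natDegree_X_sub_C] at h4
    omega
  have h2 := Subspace.biUnion_ne_univ_of_top_notMem h1
  obtain ⟨c, hc⟩ := (Set.ne_univ_iff_exists_notMem _).1 h2
  have hc' : ∀ l, p.IsRoot l → cyc A c (p /ₘ (X - C l)) ≠ 0 := by
    intro l hl h0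
    apply hc
    simp only [Set.mem_iUnion]
    exact ⟨K l, Finset.mem_image.2 ⟨l, by simpa [hp0] using hl, rfl⟩, h0⟩
  refine ⟨c, fun f hf => ?_⟩
  have hd : cyc A c (EuclideanDomain.gcd f p) = 0 := by
    rw [EuclideanDomain.gcd_eq_gcd_ab f p, map_add, mul_comm f, mul_comm p, cyc_mul, cyc_mul, hf,
      cyc_apply A c p, minpoly.aeval]
    simp
  obtain ⟨e, he⟩ := EuclideanDomain.gcd_dvd_right f p
  set d := EuclideanDomain.gcd f p with hdd
  by_cases hu : IsUnit e
  · have : p ∣ d := by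
      rw [he]; exact (hu.mul_right_dvd).2 dvd_rfl
    exact this.trans (EuclideanDomain.gcd_dvd_left f p)
  · exfalso
    have he0 : e ≠ 0 := by rintro rfl; exact hp0 (by simpa using he)
    obtain ⟨l, hl⟩ := IsAlgClosed.exists_root e (fun h => hu (isUnit_iff_degree_eq_zero.2 h))
    obtain ⟨e', rfl⟩ := dvd_iff_isRoot.2 hl
    have hpl : p.IsRoot l := by rw [he]; simp [IsRoot]
    apply hc' l hpl
    have : p /ₘ (X - C l) = e' * d := by
      rw [he, show d * ((X - C l) * e') = (X - C l) * (e' * d) by ring]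
      exact mul_divByMonic_cancel_left _ (monic_X_sub_C l)
    rw [this, cyc_mul, hd, Matrix.mulVec_zero]

/-- kernel of `A - l` on the cyclic part is a line -/
lemma cyc_eig (A : Matrix (Fin n) (Fin n) F) (c : Fin n → F)
    (hc : ∀ f, cyc A c f = 0 → minpoly F A ∣ f) (l : F) (r : F[X])
    (hr : minpoly F A = (X - C l) * r) (y : Fin n → F) (hy : y ∈ LinearMap.range (cyc A c))
    (h : aeval A (X - C l) *ᵥ y = 0) : ∃ a : F, y = a • cyc A c r := by
  obtain ⟨f, rfl⟩ := hy
  rw [← cyc_mul] at h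
  have := hc _ h
  rw [hr] at this
  obtain ⟨t, rfl⟩ := (mul_dvd_mul_iff_left (X_sub_C_ne_zero l)).1 this
  refine ⟨t.eval l, ?_⟩
  obtain ⟨t', ht'⟩ := X_sub_C_dvd_sub_C_eval (a := l) (p := t)
  have ht : t = C (t.eval l) + (X - C l) * t' := by rw [← ht']; ring
  have h0 : cyc A c (minpoly F A) = 0 := by rw [cyc_apply, minpoly.aeval, Matrix.zero_mulVec]
  conv_lhs => rw [ht, show r * (C (t.eval l) + (X - C l) * t') =
    C (t.eval l) * r + t' * ((X - C l) * r) by ring, ← hr, map_add, cyc_mul A c t', h0]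
  rw [← smul_eq_C_mul]
  simp

lemma cyc_inv (A : Matrix (Fin n) (Fin n) F) (c : Fin n → F) (q : F[X]) (y : Fin n → F)
    (hy : y ∈ LinearMap.range (cyc A c)) : aeval A q *ᵥ y ∈ LinearMap.range (cyc A c) := by
  obtain ⟨f, rfl⟩ := hy
  exact ⟨q * f, cyc_mul A c q f⟩

lemma hom_mem [IsAlgClosed F] (S : Set (Matrix (Fin n) (Fin n) F)) (hgen : IsGeneratingSystem F S)
    (A : Matrix (Fin n) (Fin n) F) (hA : A ∈ S) (c : Fin n → F)
    (hc : ∀ f, cyc A c f = 0 → minpoly F A ∣ f) (g : F[X])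
    (hg : ∀ y, aeval A g *ᵥ y ∈ LinearMap.range (cyc A c)) (N : ℕ)
    (hN : (minpoly F A).natDegree + n ≤ N + 2) (d : ℕ) :
    ∀ h s : F[X], h.natDegree = d → minpoly F A = h * s * g →
    ∀ M : Matrix (Fin n) (Fin n) F, (∀ y, M *ᵥ y ∈ LinearMap.range (cyc A c)) →
    aeval A h * M = 0 → M ∈ wordSpan F S N := by
  have hp0 : minpoly F A ≠ 0 := minpoly.ne_zero (Matrix.isIntegral A)
  induction d with
  | zero =>
    intro h s hd hp M hM hhM
    have h0 : h ≠ 0 := by rintro rfl; apply hp0; rw [hp]; simp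
    rw [eq_C_of_natDegree_eq_zero hd] at hhM h0
    have h0' : h.coeff 0 ≠ 0 := by simpa using h0
    rw [aeval_C, Algebra.algebraMap_eq_smul_one, smul_mul_assoc, one_mul, smul_eq_zero] at hhM
    rw [hhM.resolve_left h0']
    exact zero_mem _
  | succ d ih =>
    intro h s hd hp M hM hhM
    obtain ⟨l, hl⟩ := IsAlgClosed.exists_root h (by
      intro h'; have := natDegree_eq_zero_iff_degree_le_zero.2 h'.le; omega)
    obtain ⟨h', rfl⟩ := dvd_iff_isRoot.2 hl
    have h'0 : h' ≠ 0 := by rintro rfl; apply hp0; rw [hp]; simp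
    have hd' : h'.natDegree = d := by
      rw [natDegree_mul (X_sub_C_ne_zero l) h'0, natDegree_X_sub_C] at hd; omega
    have hr : minpoly F A = (X - C l) * (h' * (s * g)) := by rw [hp]; ring
    have hr0 : h' * (s * g) ≠ 0 := by intro h; rw [h, mul_zero] at hr; exact hp0 hr
    have hdeg : (minpoly F A).natDegree = 1 + (h'.natDegree + (s * g).natDegree) := by
      rw [hr, natDegree_mul (X_sub_C_ne_zero l) hr0, natDegree_X_sub_C,
        natDegree_mul h'0 (right_ne_zero_of_mul hr0)]
    -- columns
    have key : ∀ B : Matrix (Fin n) (Fin n) F, (∀ y, B *ᵥ y ∈ LinearMap.range (cyc A c)) →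
        aeval A (X - C l) * B = 0 →
        ∃ f : Fin n → F, B = Matrix.vecMulVec (cyc A c (h' * (s * g))) f := by
      intro B hB hB0
      have : ∀ i, ∃ a : F, B *ᵥ Pi.single i 1 = a • cyc A c (h' * (s * g)) := by
        intro i
        apply cyc_eig A c hc l _ hr _ (hB _)
        rw [Matrix.mulVec_mulVec, hB0, Matrix.zero_mulVec]
      choose f hf using this
      refine ⟨f, ?_⟩
      ext i j
      have := congrFun (hf j) i
      simp at this
      rw [this, Matrix.vecMulVec_apply, mul_comm]
    have hq : ∀ y, aeval A (s * g) *ᵥ y ∈ LinearMap.range (cyc A c) := by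
      intro y
      rw [map_mul, ← Matrix.mulVec_mulVec]
      exact cyc_inv A c s _ (hg y)
    obtain ⟨f0, hf0⟩ := key (aeval A (h' * (s * g)))
      (by intro y; rw [map_mul, ← Matrix.mulVec_mulVec]; exact cyc_inv A c _ _ (hq y))
      (by rw [← map_mul, ← hr, minpoly.aeval])
    obtain ⟨f, hf⟩ := key (aeval A h' * M)
      (by intro y; rw [← Matrix.mulVec_mulVec]; exact cyc_inv A c _ _ (hM y))
      (by rw [← mul_assoc, ← map_mul, hhM])
    have hf00 : f0 ≠ 0 := by
      rintro rfl
      rw [Matrix.vecMulVec_zero] at hf0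
      have := natDegree_le_of_dvd (minpoly.dvd F A hf0) hr0
      rw [natDegree_mul h'0 (right_ne_zero_of_mul hr0)] at this
      omega
    obtain ⟨W, hW, hWf⟩ := row_top S hgen f0 hf00 f
    have hmem : aeval A (s * g) * W ∈ wordSpan F S N := by
      have := ws_mul S (ws_aeval hA (s * g) le_rfl) hW
      have hn : 0 < n := by
        rcases Nat.eq_zero_or_pos n with rfl | h
        · exact absurd (Subsingleton.elim _ _) hf00
        · exact h
      exact ws_mono S (by omega) this
    have hmem2 : M - aeval A (s * g) * W ∈ wordSpan F S N := by
      apply ih h' ((X - C l) * s) hd' (by rw [hp]; ring)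
      · intro y
        rw [Matrix.sub_mulVec, ← Matrix.mulVec_mulVec]
        exact sub_mem (hM y) (hq _)
      · rw [mul_sub, ← mul_assoc, ← map_mul, hf, hf0, Matrix.vecMulVec_mul, hWf, sub_self]
    simpa using add_mem hmem2 hmem

lemma cyc_dim (A : Matrix (Fin n) (Fin n) F) (c : Fin n → F)
    (hc : ∀ f, cyc A c f = 0 → minpoly F A ∣ f) (g s : F[X]) (hp : minpoly F A = s * g)
    (U : Submodule F (Fin n → F)) (hU : ∀ f, cyc A c (f * g) ∈ U) :
    s.natDegree ≤ Module.finrank F U := by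
  have hp0 : minpoly F A ≠ 0 := minpoly.ne_zero (Matrix.isIntegral A)
  have hg0 : g ≠ 0 := by rintro rfl; simp [hp0] at hp
  let φ : degreeLT F s.natDegree →ₗ[F] U :=
    LinearMap.codRestrict U ((cyc A c).comp ((LinearMap.mulRight F g).comp (Submodule.subtype _)))
      (fun f => hU f)
  have hinj : Function.Injective φ := by
    rw [← LinearMap.ker_eq_bot, LinearMap.ker_eq_bot']
    rintro ⟨f, hf⟩ h0
    have h1 : cyc A c (f * g) = 0 := congrArg Subtype.val h0
    have h2 := hc _ h1
    rw [hp, mul_dvd_mul_iff_right hg0] at h2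
    have : f = 0 := by
      by_contra hne
      have h3 := natDegree_le_of_dvd h2 hne
      rw [mem_degreeLT] at hf
      have := (natDegree_lt_iff_degree_lt hne).2 hf
      omega
    simpa using this
  have := LinearMap.finrank_le_finrank_of_injective hinj
  rwa [LinearEquiv.finrank_eq (degreeLTEquiv F s.natDegree), Module.finrank_fin_fun] at this

lemma exists_g (A : Matrix (Fin n) (Fin n) F) (c : Fin n → F)
    (hc : ∀ f, cyc A c f = 0 → minpoly F A ∣ f) :
    ∃ g s : F[X], minpoly F A = s * g ∧ g.natDegree + (minpoly F A).natDegree ≤ n ∧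
      ∀ y, aeval A g *ᵥ y ∈ LinearMap.range (cyc A c) := by
  set K := LinearMap.range (cyc A c) with hK
  have hinv : K ≤ K.comap (Matrix.mulVecLin A) := by
    intro y hy
    have := cyc_inv A c X y hy
    rw [aeval_X] at this
    exact this
  let B : Module.End F ((Fin n → F) ⧸ K) := K.mapQ K (Matrix.mulVecLin A) hinv
  have hB : ∀ f : F[X], ∀ y, aeval B f (K.mkQ y) = K.mkQ (aeval A f *ᵥ y) := by
    intro f
    induction f using Polynomial.induction_on' with
    | add p q hp hq => intro y; simp only [map_add, LinearMap.add_apply, hp, hq, Matrix.add_mulVec]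
    | monomial m a =>
      intro y
      simp only [aeval_monomial, Algebra.algebraMap_eq_smul_one, smul_mul_assoc, one_mul,
        LinearMap.smul_apply, Matrix.smul_mulVec, map_smul]
      congr 1
      induction m generalizing y with
      | zero => simp
      | succ m ih =>
        rw [pow_succ, pow_succ, ← Matrix.mulVec_mulVec, ← ih]
        rfl
  have hdvd : minpoly F B ∣ minpoly F A := by
    apply minpoly.dvd
    ext y
    have := hB (minpoly F A) (Pi.single y 1)
    rw [minpoly.aeval, Matrix.zero_mulVec, map_zero] at this
    simpa using this
  obtain ⟨s, hs⟩ := hdvd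
  refine ⟨minpoly F B, s, by rw [hs, mul_comm], ?_, fun y => ?_⟩
  · have h1 := cyc_dim A c hc 1 (minpoly F A) (by simp) K (fun f => ⟨_, rfl⟩)
    have h2 := natDegree_le_of_dvd (LinearMap.minpoly_dvd_charpoly B) B.charpoly_monic.ne_zero
    rw [LinearMap.charpoly_natDegree] at h2
    have h3 := Submodule.finrank_quotient_add_finrank K
    rw [Module.finrank_fin_fun] at h3
    omega
  · have := hB (minpoly F B) y
    rw [minpoly.aeval] at this
    simpa using this.symm
end

theorem length_le_of_minpoly_deg_sub_k_jordan_condition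
    (F : Type*) [Field F] [IsAlgClosed F] (n k : ℕ)
    (hn : 0 < n) (hk : 0 < k) (hkn : 2 * k < n)
    (S : Finset (Matrix (Fin n) (Fin n) F))
    (hgen : IsGeneratingSystem F (S : Set (Matrix (Fin n) (Fin n) F)))
    (A : Matrix (Fin n) (Fin n) F) (hAS : A ∈ S)
    (hdeg : (minpoly F A).natDegree = n - k)
    (hjordan : ∀ lam ∈ spectrum F A,
      2 * (A.charpoly.rootMultiplicity lam - (minpoly F A).rootMultiplicity lam) <
        A.charpoly.rootMultiplicity lam) :
    genLength F (S : Set (Matrix (Fin n) (Fin n) F)) ≤ 2 * n - 2 + k := by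
  apply Nat.sInf_le
  show wordSpan F _ _ = ⊤
  have hA : A ∈ (S : Set (Matrix (Fin n) (Fin n) F)) := hAS
  obtain ⟨c, hc⟩ := exists_cyc A
  obtain ⟨g, s, hp, hgd, hg⟩ := exists_g A c hc
  have hp0 : minpoly F A ≠ 0 := minpoly.ne_zero (Matrix.isIntegral A)
  have hsg : s * g ≠ 0 := hp ▸ hp0
  have hsd : (minpoly F A).natDegree = s.natDegree + g.natDegree := by
    rw [hp, natDegree_mul (left_ne_zero_of_mul hsg) (right_ne_zero_of_mul hsg)]
  let U : Submodule F (Fin n → F) :=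
    LinearMap.range (cyc A c) ⊓ LinearMap.ker (Matrix.mulVecLin (aeval A s))
  have hUd : s.natDegree ≤ Module.finrank F U := by
    apply cyc_dim A c hc g s hp U
    intro f
    refine ⟨⟨_, rfl⟩, ?_⟩
    show aeval A s *ᵥ cyc A c (f * g) = 0
    rw [← cyc_mul,
      show s * (f * g) = f * (s * g) by ring, ← hp, cyc_mul, cyc_apply, minpoly.aeval]
    simp
  have hU0 : U ≠ ⊥ := by
    intro h
    rw [h, finrank_bot] at hUd
    omega
  have htop := act_top _ hgen U hU0 (2 * k) (by omega)
  have hrank : ∀ y ∈ U, ∀ z, Matrix.vecMulVec y z ∈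
      wordSpan F (S : Set (Matrix (Fin n) (Fin n) F)) (2 * n - 2 - k) := by
    rintro y ⟨hy1, hy2⟩ z
    apply hom_mem _ hgen A hA c hc g hg (2 * n - 2 - k) (by omega) _ s 1 rfl (by rw [hp]; ring)
    · intro x
      rw [Matrix.vecMulVec_mulVec]
      simpa using Submodule.smul_mem _ _ hy1
    · rw [Matrix.mul_vecMulVec]
      have : aeval A s *ᵥ y = 0 := hy2
      rw [this, Matrix.zero_vecMulVec]
  have hrank2 : ∀ y z, Matrix.vecMulVec y z ∈
      wordSpan F (S : Set (Matrix (Fin n) (Fin n) F)) (2 * n - 2 + k) := by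
    intro y z
    let φ : (Fin n → F) →ₗ[F] Matrix (Fin n) (Fin n) F :=
      { toFun := fun y => Matrix.vecMulVec y z
        map_add' := fun a b => Matrix.add_vecMulVec a b z
        map_smul' := fun a b => Matrix.smul_vecMulVec a b z }
    have : act (S : Set (Matrix (Fin n) (Fin n) F)) U (2 * k) ≤ (wordSpan F (S : Set (Matrix (Fin n) (Fin n) F))
        (2 * n - 2 + k)).comap φ := by
      refine Submodule.map₂_le.2 fun M hM x hx => ?_
      have := ws_mono _ (show 2 * k + (2 * n - 2 - k) ≤ 2 * n - 2 + k by omega)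
        (ws_mul _ hM (hrank x hx z))
      rw [Matrix.mul_vecMulVec] at this
      exact this
    rw [htop] at this
    exact this (Submodule.mem_top (x := y))
  refine eq_top_iff.2 fun M _ => ?_
  have : M = ∑ i, Matrix.vecMulVec (M.col i) (Pi.single i 1) := by
    ext a b
    simp [Matrix.sum_apply, Matrix.vecMulVec_apply, Pi.single_apply]
  rw [this]
  exact Submodule.sum_mem _ fun i _ => hrank2 _ _
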